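/- arXiv:1702.03514 — 2 statements merged into one kernel-verified Lean document; each statement's English description precedes it below -/
import Mathlib

section
/- Let K be a number field with ring of integers O_K, and let V be a finite-dimensional K-vector space equipped, for each finite place v of K, with a non-Archimedean K_v-norm ‖·‖_v on V ⊗_K K_v. Then the following two conditions are equivalent: (a) for every s ∈ V one has ‖s ⊗ 1‖_v ≤ 1 for all but finitely many finite places v; (b) the set Ĥ⁰_f(V̄) := {s ∈ V : ‖s ⊗ 1‖_v ≤ 1 for every finite place v} contains an O_K-submodule E of V that spans V as a K-vector space. -/
open IsDedekindDomain NumberField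
open scoped TensorProduct NNReal

set_option synthInstance.maxHeartbeats 1000000
set_option maxHeartbeats 1000000

/-- The normalized absolute value at a finite place `v` of a number field `K`,
extended to the `v`-adic completion `K_v`: `|α|_v = (#(𝓞 K / 𝔭_v))^(-ord_v α)`. -/
noncomputable def vabs {K : Type*} [Field K] [NumberField K]
    (v : HeightOneSpectrum (𝓞 K)) (x : v.adicCompletion K) : ℝ :=
  WithZeroMulInt.toNNReal (e := (Nat.card (𝓞 K ⧸ v.asIdeal) : ℝ≥0))
    (by
      haveI : Fintype (𝓞 K ⧸ v.asIdeal) := @Fintype.ofFinite _ (Ideal.finiteQuotientOfFreeOfNeBot _ v.ne_bot)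
      haveI : Finite (𝓞 K ⧸ v.asIdeal) := Finite.of_fintype _
      exact_mod_cast Nat.card_ne_zero.mpr ⟨⟨0⟩, this⟩)
    (Valued.v x)

noncomputable instance adicSMulCommClass {K : Type*} [Field K] [NumberField K]
    (v : HeightOneSpectrum (𝓞 K)) :
    SMulCommClass K (v.adicCompletion K) (v.adicCompletion K) := Algebra.to_smulCommClass

lemma one_lt_cardq {K : Type*} [Field K] [NumberField K] (v : HeightOneSpectrum (𝓞 K)) :
    1 < (Nat.card (𝓞 K ⧸ v.asIdeal) : ℝ≥0) := by
  have h := NumberField.HeightOneSpectrum.one_lt_absNorm_nnreal v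
  rwa [Ideal.absNorm_apply, Submodule.cardQuot_apply] at h

lemma vabs_nonneg' {K : Type*} [Field K] [NumberField K] (v : HeightOneSpectrum (𝓞 K))
    (x : v.adicCompletion K) : 0 ≤ vabs v x := by
  unfold vabs; exact NNReal.coe_nonneg _

lemma vabs_mul' {K : Type*} [Field K] [NumberField K] (v : HeightOneSpectrum (𝓞 K))
    (x y : v.adicCompletion K) : vabs v (x * y) = vabs v x * vabs v y := by
  unfold vabs; rw [map_mul, map_mul, NNReal.coe_mul]

lemma vabs_one' {K : Type*} [Field K] [NumberField K] (v : HeightOneSpectrum (𝓞 K)) :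
    vabs v (1 : v.adicCompletion K) = 1 := by
  unfold vabs; rw [map_one, map_one, NNReal.coe_one]

lemma vabs_pow' {K : Type*} [Field K] [NumberField K] (v : HeightOneSpectrum (𝓞 K))
    (x : v.adicCompletion K) (n : ℕ) : vabs v (x ^ n) = vabs v x ^ n := by
  induction n with
  | zero => simp [vabs_one']
  | succ n ih => rw [pow_succ, vabs_mul', ih, pow_succ]

lemma vabs_le_one {K : Type*} [Field K] [NumberField K] (v : HeightOneSpectrum (𝓞 K))
    (c : K) : vabs v (algebraMap K (v.adicCompletion K) c) ≤ 1 ↔ v.valuation K c ≤ 1 := by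
  unfold vabs
  rw [← NNReal.coe_one, NNReal.coe_le_coe, WithZeroMulInt.toNNReal_le_one_iff (one_lt_cardq v)]
  erw [v.valuedAdicCompletion_eq_valuation' c]

lemma vabs_lt_one {K : Type*} [Field K] [NumberField K] (v : HeightOneSpectrum (𝓞 K))
    (c : K) : vabs v (algebraMap K (v.adicCompletion K) c) < 1 ↔ v.valuation K c < 1 := by
  unfold vabs
  rw [← NNReal.coe_one, NNReal.coe_lt_coe, WithZeroMulInt.toNNReal_lt_one_iff (one_lt_cardq v)]
  erw [v.valuedAdicCompletion_eq_valuation' c]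

lemma finite_bad {K : Type*} [Field K] [NumberField K] (c : K) :
    {v : HeightOneSpectrum (𝓞 K) | ¬ v.valuation K c ≤ 1}.Finite := by
  obtain ⟨a, b, hb, rfl⟩ := IsFractionRing.div_surjective (A := 𝓞 K) c
  have hb0 : b ≠ 0 := nonZeroDivisors.ne_zero hb
  refine (Ideal.finite_factors (I := Ideal.span {b}) (by simpa using hb0)).subset ?_
  intro v hv
  by_contra hd
  apply hv
  have h1 : v.valuation K (algebraMap (𝓞 K) K b) = 1 := by
    refine le_antisymm (v.valuation_le_one b) (not_lt.mp fun h => hd ?_)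
    exact (v.valuation_lt_one_iff_dvd b).mp h
  rw [map_div₀, h1, div_one]
  exact v.valuation_le_one a

/-- For a finite-dimensional `K`-vector space `V` equipped with a
non-Archimedean `K_v`-norm on `K_v ⊗_K V` for each finite place `v`, the following are
equivalent: (a) each `s ∈ V` satisfies `‖s ⊗ 1‖_v ≤ 1` for all but finitely many `v`;
(b) `Ĥ⁰_f(V̄)` contains an `𝓞 K`-submodule `E` of `V` with `E_K = V`
(i.e. `E` spans `V` over `K`). -/
theorem stmt0 {K V : Type*} [Field K] [NumberField K]
    [AddCommGroup V] [Module K V] [FiniteDimensional K V]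
    [Module (𝓞 K) V] [IsScalarTower (𝓞 K) K V]
    (N : (v : HeightOneSpectrum (𝓞 K)) → ((v.adicCompletion K) ⊗[K] V) → ℝ)
    (hN0 : ∀ v x, 0 ≤ N v x)
    (hNeq : ∀ v x, N v x = 0 ↔ x = 0)
    (hNmax : ∀ v x y, N v (x + y) ≤ max (N v x) (N v y))
    (hNsmul : ∀ (v : HeightOneSpectrum (𝓞 K)) (a : v.adicCompletion K)
      (x : (v.adicCompletion K) ⊗[K] V), N v (a • x) = vabs v a * N v x) :
    (∀ s : V, {v : HeightOneSpectrum (𝓞 K) |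
        ¬ N v ((1 : v.adicCompletion K) ⊗ₜ[K] s) ≤ 1}.Finite) ↔
      ∃ E : Submodule (𝓞 K) V,
        (E : Set V) ⊆ {s : V | ∀ v : HeightOneSpectrum (𝓞 K),
          N v ((1 : v.adicCompletion K) ⊗ₜ[K] s) ≤ 1} ∧
        Submodule.span K (E : Set V) = ⊤ := by
  have key : ∀ (v : HeightOneSpectrum (𝓞 K)) (c : K) (s : V),
      N v ((1 : v.adicCompletion K) ⊗ₜ[K] (c • s)) =
        vabs v (algebraMap K (v.adicCompletion K) c) * N v ((1 : v.adicCompletion K) ⊗ₜ[K] s) := by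
    intro v c s
    rw [← hNsmul, TensorProduct.smul_tmul', ← TensorProduct.smul_tmul, Algebra.smul_def,
      smul_eq_mul]
  have keyO : ∀ (v : HeightOneSpectrum (𝓞 K)) (c : 𝓞 K) (s : V),
      N v ((1 : v.adicCompletion K) ⊗ₜ[K] (c • s)) ≤ N v ((1 : v.adicCompletion K) ⊗ₜ[K] s) := by
    intro v c s
    rw [← algebraMap_smul K c s, key]
    exact mul_le_of_le_one_left (hN0 _ _) ((vabs_le_one v _).2 (v.valuation_le_one c))
  constructor
  · intro ha
    let E : Submodule (𝓞 K) V :=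
      { carrier := {s : V | ∀ v : HeightOneSpectrum (𝓞 K),
          N v ((1 : v.adicCompletion K) ⊗ₜ[K] s) ≤ 1}
        add_mem' := by
          intro a b ha hb v
          rw [TensorProduct.tmul_add]
          exact (hNmax _ _ _).trans (max_le (ha v) (hb v))
        zero_mem' := by
          intro v
          rw [TensorProduct.tmul_zero, (hNeq v 0).2 rfl]
          exact zero_le_one
        smul_mem' := by
          intro c s hs v
          exact (keyO v c s).trans (hs v) }
    refine ⟨E, fun s hs => hs, ?_⟩
    rw [eq_top_iff]
    intro s _
    have loc : ∀ v : HeightOneSpectrum (𝓞 K), ∃ d : 𝓞 K, d ≠ 0 ∧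
        N v ((1 : v.adicCompletion K) ⊗ₜ[K] (d • s)) ≤ 1 := by
      intro v
      obtain ⟨x, hx, hx0⟩ := Submodule.exists_mem_ne_zero_of_ne_bot v.ne_bot
      have hlt := (vabs_lt_one v _).2 ((v.valuation_lt_one_iff_mem (K := K) x).2 hx)
      have ht := (tendsto_pow_atTop_nhds_zero_of_lt_one (vabs_nonneg' v _) hlt).mul_const
        (N v ((1 : v.adicCompletion K) ⊗ₜ[K] s))
      rw [zero_mul] at ht
      obtain ⟨n, hn⟩ := (ht.eventually (Iic_mem_nhds zero_lt_one)).exists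
      refine ⟨x ^ n, pow_ne_zero _ hx0, ?_⟩
      rw [← algebraMap_smul K (x ^ n) s, key, map_pow, map_pow, vabs_pow']
      exact hn
    choose d hd0 hd using loc
    have hfin := ha s
    set D : 𝓞 K := ∏ v ∈ hfin.toFinset, d v with hD
    have hD0 : D ≠ 0 := Finset.prod_ne_zero_iff.2 fun v _ => hd0 v
    have hDs : D • s ∈ E := by
      intro v
      by_cases hv : N v ((1 : v.adicCompletion K) ⊗ₜ[K] s) ≤ 1
      · exact (keyO v D s).trans hv
      · have hdvd : d v ∣ D := Finset.dvd_prod_of_mem d (hfin.mem_toFinset.2 hv)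
        obtain ⟨e, he⟩ := hdvd
        rw [he, mul_comm, ← algebraMap_smul K (e * d v) s, map_mul, mul_smul, algebraMap_smul,
          algebraMap_smul]
        exact (keyO v e _).trans (hd v)
    have hDK : algebraMap (𝓞 K) K D ≠ 0 := by
      rw [Ne, FaithfulSMul.algebraMap_eq_zero_iff]; exact hD0
    have : s = (algebraMap (𝓞 K) K D)⁻¹ • (D • s) := by
      rw [← algebraMap_smul K D s, inv_smul_smul₀ hDK]
    rw [this]
    exact Submodule.smul_mem _ _ (Submodule.subset_span hDs)
  · rintro ⟨E, hE, hspan⟩ s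
    have hs : s ∈ Submodule.span K (E : Set V) := hspan ▸ Submodule.mem_top
    induction hs using Submodule.span_induction with
    | mem x hx =>
      refine Set.finite_empty.subset fun v hv => hv (hE hx v)
    | zero =>
      refine Set.finite_empty.subset fun v hv => hv ?_
      rw [TensorProduct.tmul_zero, (hNeq v 0).2 rfl]
      exact zero_le_one
    | add x y _ _ hx hy =>
      refine (hx.union hy).subset fun v hv => ?_
      by_contra h
      simp only [Set.mem_union, Set.mem_setOf_eq, not_or, not_not] at h
      apply hv
      rw [TensorProduct.tmul_add]
      exact (hNmax _ _ _).trans (max_le h.1 h.2)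
    | smul c x _ hx =>
      refine ((finite_bad c).union hx).subset fun v hv => ?_
      by_contra h
      simp only [Set.mem_union, Set.mem_setOf_eq, not_or, not_not] at h
      apply hv
      rw [key]
      exact mul_le_one₀ ((vabs_le_one v c).2 h.1) (hN0 _ _) h.2
end

section
/- Let R be a commutative ring, let ϖ ∈ R, and let φ be a multiplicative seminorm on R (i.e., φ : R → ℝ with φ(a) ≥ 0, φ(0) = 0, φ(1) = 1, φ(ab) = φ(a)φ(b), and φ(a+b) ≤ φ(a) + φ(b)) such that φ(ϖ) > 0. Then there exists a unique multiplicative seminorm ψ on the localization R[ϖ^{-1}] such that ψ(ι(a)) = φ(a) for all a ∈ R, where ι : R → R[ϖ^{-1}] is the canonical localization map; it is given by ψ(ι(a)/ϖ^n) = φ(ϖ)^{-n}·φ(a). -/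
/-- Extension of a multiplicative seminorm `φ` with `φ ϖ > 0` to the localization
`R[ϖ⁻¹]`: there is a unique multiplicative seminorm `ψ` on `R[ϖ⁻¹]` with `ψ ∘ ι = φ`,
and it satisfies `ψ(ι a / ϖ^n) = φ(ϖ)⁻ⁿ · φ(a)`. -/
theorem stmt5 {R : Type*} [CommRing R] (ϖ : R) (φ : R → ℝ)
    (hφ0 : ∀ a : R, 0 ≤ φ a) (hφz : φ 0 = 0) (hφ1 : φ 1 = 1)
    (hφm : ∀ a b : R, φ (a * b) = φ a * φ b)
    (hφa : ∀ a b : R, φ (a + b) ≤ φ a + φ b)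
    (hϖ : 0 < φ ϖ) :
    ∃ ψ : Localization.Away ϖ → ℝ,
      (((∀ x, 0 ≤ ψ x) ∧ ψ 0 = 0 ∧ ψ 1 = 1 ∧
          (∀ x y, ψ (x * y) = ψ x * ψ y) ∧ (∀ x y, ψ (x + y) ≤ ψ x + ψ y)) ∧
        (∀ a : R, ψ (algebraMap R (Localization.Away ϖ) a) = φ a) ∧
        (∀ (a : R) (n : ℕ),
          ψ (algebraMap R (Localization.Away ϖ) a * (IsLocalization.Away.invSelf ϖ) ^ n) =
            (φ ϖ) ^ (-(n : ℤ)) * φ a)) ∧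
      ∀ ψ' : Localization.Away ϖ → ℝ,
        (((∀ x, 0 ≤ ψ' x) ∧ ψ' 0 = 0 ∧ ψ' 1 = 1 ∧
            (∀ x y, ψ' (x * y) = ψ' x * ψ' y) ∧ (∀ x y, ψ' (x + y) ≤ ψ' x + ψ' y)) ∧
          (∀ a : R, ψ' (algebraMap R (Localization.Away ϖ) a) = φ a)) → ψ' = ψ := by
  have hpow : ∀ n : ℕ, φ (ϖ ^ n) = φ ϖ ^ n := by
    intro n
    induction n with
    | zero => simp [hφ1]
    | succ k ih => rw [pow_succ, hφm, ih, pow_succ]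
  have hp : ∀ n : ℕ, φ ϖ ^ n ≠ 0 := fun n => (pow_pos hϖ n).ne'
  have hinj : ∀ a b : R, algebraMap R (Localization.Away ϖ) a = algebraMap R _ b → φ a = φ b := by
    intro a b h
    obtain ⟨⟨c, k, rfl⟩, hc⟩ :=
      (IsLocalization.eq_iff_exists (Submonoid.powers ϖ) (Localization.Away ϖ)).1 h
    have h2 := congrArg φ hc
    simp only [hφm, hpow] at h2
    exact mul_left_cancel₀ (hp k) h2
  have hsurj : ∀ x : Localization.Away ϖ, ∃ (n : ℕ) (a : R),
      x * algebraMap R _ ϖ ^ n = algebraMap R _ a := fun x => IsLocalization.Away.surj ϖ x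
  choose N A hA using hsurj
  obtain ⟨ψ, hψ⟩ : ∃ ψ : Localization.Away ϖ → ℝ, ∀ x (n : ℕ) (a : R),
      x * algebraMap R _ ϖ ^ n = algebraMap R _ a → ψ x * φ ϖ ^ n = φ a := by
    refine ⟨fun x => φ (A x) / φ ϖ ^ N x, fun x n a h => ?_⟩
    have h1 : φ (A x * ϖ ^ n) = φ (a * ϖ ^ N x) := by
      apply hinj
      rw [map_mul, map_mul, ← hA, ← h, map_pow, map_pow]
      ring
    rw [hφm, hφm, hpow, hpow] at h1
    have := hp (N x)
    field_simp
    linarith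
  have hι : ∀ a : R, ψ (algebraMap R (Localization.Away ϖ) a) = φ a := by
    intro a
    simpa using hψ (algebraMap R _ a) 0 a (by simp)
  refine ⟨ψ, ⟨⟨?_, ?_, ?_, ?_, ?_⟩, hι, ?_⟩, ?_⟩
  · intro x
    have h := hψ x _ _ (hA x)
    have h0 := hφ0 (A x)
    rw [← h] at h0
    exact nonneg_of_mul_nonneg_left h0 (pow_pos hϖ _)
  · rw [← map_zero (algebraMap R (Localization.Away ϖ)), hι, hφz]
  · rw [← map_one (algebraMap R (Localization.Away ϖ)), hι, hφ1]
  · intro x y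
    have hx := hψ x _ _ (hA x)
    have hy := hψ y _ _ (hA y)
    have h := hψ (x * y) (N x + N y) (A x * A y) (by
      rw [map_mul, ← hA, ← hA]; ring)
    rw [hφm, ← hx, ← hy] at h
    apply mul_right_cancel₀ (hp (N x + N y))
    rw [h]; ring
  · intro x y
    have hx := hψ x _ _ (hA x)
    have hy := hψ y _ _ (hA y)
    have h := hψ (x + y) (N x + N y) (A x * ϖ ^ N y + A y * ϖ ^ N x) (by
      rw [map_add, map_mul, map_mul, ← hA, ← hA, map_pow, map_pow]; ring)
    have h2 := hφa (A x * ϖ ^ N y) (A y * ϖ ^ N x)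
    rw [← h, hφm, hφm, hpow, hpow, ← hx, ← hy] at h2
    apply le_of_mul_le_mul_right _ (pow_pos hϖ (N x + N y))
    refine h2.trans (le_of_eq ?_)
    ring
  · intro a n
    have h := hψ (algebraMap R (Localization.Away ϖ) a * (IsLocalization.Away.invSelf ϖ) ^ n) n a (by
      rw [mul_assoc, ← mul_pow, mul_comm (IsLocalization.Away.invSelf ϖ),
        IsLocalization.Away.mul_invSelf, one_pow, mul_one])
    rw [← h, zpow_neg, zpow_natCast]
    have := hp n
    field_simp
  · rintro ψ' ⟨⟨-, -, -, hm, -⟩, he⟩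
    funext x
    have h := hψ x _ _ (hA x)
    have h' := congrArg ψ' (hA x)
    rw [hm, ← map_pow, he, he, hpow, ← h] at h'
    exact mul_right_cancel₀ (hp _) h'
end
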